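/- Let P be a probability measure on R^d absolutely continuous with respect to Lebesgue measure. If (C_n) is a sequence of compact convex subsets of R^d converging to a compact convex set C in the Hausdorff metric, then P(C_n △ C) → 0, i.e., convergence in the Hausdorff metric implies convergence in the symmetric difference pseudometric d_P(A,B) = P(A △ B) on compact convex sets. -/

import Mathlib

open MeasureTheory

lemma aux_sep {d : ℕ} (K L : Set (EuclideanSpace ℝ (Fin d))) (hK : IsCompact K)
    (hKc : Convex ℝ K) (hKne : K.Nonempty) (x : EuclideanSpace ℝ (Fin d)) (hx : x ∉ K)
    (r : ℝ) (hr : 0 < r) (hball : Metric.closedBall x r ⊆ L)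
    (fin : Metric.hausdorffEDist L K ≠ ⊤) :
    r ≤ Metric.hausdorffDist K L := by
  obtain ⟨f, u, h1, h2⟩ := geometric_hahn_banach_closed_point hKc hK.isClosed hx
  obtain ⟨v, rfl⟩ := (InnerProductSpace.toDual ℝ (EuclideanSpace ℝ (Fin d))).surjective f
  simp only [InnerProductSpace.toDual_apply_apply] at h1 h2
  have hv : v ≠ 0 := by
    rintro rfl
    obtain ⟨y, hy⟩ := hKne
    have := h1 y hy
    simp at this h2
    linarith
  have hv' : 0 < ‖v‖ := norm_pos_iff.2 hv
  set z := x + (r / ‖v‖) • v with hz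
  have hzL : z ∈ L := by
    apply hball
    rw [Metric.mem_closedBall, dist_eq_norm, hz, add_sub_cancel_left, norm_smul,
      Real.norm_of_nonneg (by positivity)]
    exact le_of_eq (by field_simp)
  rw [Metric.hausdorffDist_comm]
  refine le_trans ?_ (Metric.infDist_le_hausdorffDist_of_mem hzL fin)
  rw [Metric.le_infDist hKne]
  intro y hy
  have hy1 := h1 y hy
  have hcs := real_inner_le_norm v (z - y)
  have e : inner ℝ v (z - y) = inner ℝ v x - inner ℝ v y + r * ‖v‖ := by
    rw [hz, inner_sub_right, inner_add_right, inner_smul_right, real_inner_self_eq_norm_sq]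
    field_simp
    ring
  rw [dist_eq_norm]
  by_contra hlt
  push Not at hlt
  nlinarith

/-- for `P` absolutely continuous w.r.t. Lebesgue measure on
`ℝ^d`, Hausdorff-metric convergence of nonempty compact convex sets implies
convergence in the symmetric-difference pseudometric `d_P(A,B) = P(A △ B)`. -/
theorem stmt13 {d : ℕ} (P : Measure (EuclideanSpace ℝ (Fin d)))
    [IsProbabilityMeasure P] (hac : P ≪ (volume : Measure (EuclideanSpace ℝ (Fin d))))
    (C : ℕ → Set (EuclideanSpace ℝ (Fin d))) (Clim : Set (EuclideanSpace ℝ (Fin d)))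
    (hCcpt : ∀ n, IsCompact (C n)) (hCcvx : ∀ n, Convex ℝ (C n))
    (hCne : ∀ n, (C n).Nonempty)
    (hcpt : IsCompact Clim) (hcvx : Convex ℝ Clim) (hne : Clim.Nonempty)
    (hH : Filter.Tendsto (fun n => Metric.hausdorffDist (C n) Clim)
      Filter.atTop (nhds 0)) :
    Filter.Tendsto (fun n => P (symmDiff (C n) Clim)) Filter.atTop (nhds 0) := by
  have fin : ∀ n, Metric.hausdorffEDist (C n) Clim ≠ ⊤ := fun n =>
    Metric.hausdorffEDist_ne_top_of_nonempty_of_bounded (hCne n) hne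
      (hCcpt n).isBounded hcpt.isBounded
  have key : ∀ x, x ∉ frontier Clim → ∀ᶠ n in Filter.atTop, x ∉ symmDiff (C n) Clim := by
    intro x hx
    by_cases hxC : x ∈ Clim
    · have hi : x ∈ interior Clim := by
        by_contra h
        exact hx ⟨subset_closure hxC, h⟩
      obtain ⟨r, hr, hb⟩ := Metric.nhds_basis_closedBall.mem_iff.1 (mem_interior_iff_mem_nhds.1 hi)
      filter_upwards [hH.eventually (gt_mem_nhds hr)] with n hn
      have hxn : x ∈ C n := by
        by_contra h
        have := aux_sep (C n) Clim (hCcpt n) (hCcvx n) (hCne n) x h r hr hb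
          (by rw [Metric.hausdorffEDist_comm]; exact fin n)
        linarith
      simp [Set.mem_symmDiff, hxC, hxn]
    · have hp : 0 < Metric.infDist x Clim := (hcpt.isClosed.notMem_iff_infDist_pos hne).1 hxC
      filter_upwards [hH.eventually (gt_mem_nhds hp)] with n hn
      have hxn : x ∉ C n := by
        intro h
        have := Metric.infDist_le_hausdorffDist_of_mem h (fin n)
        linarith
      simp [Set.mem_symmDiff, hxC, hxn]
  have hfr : P (frontier Clim) = 0 := hac (hcvx.addHaar_frontier volume)
  have hlim := tendsto_measure_of_ae_tendsto_indicator_of_isFiniteMeasure (μ := P)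
    (A := ∅) (As := fun n => symmDiff (C n) Clim) Filter.atTop MeasurableSet.empty
    (fun n => (hCcpt n).measurableSet.symmDiff hcpt.measurableSet)
    (by
      have : ∀ᵐ x ∂P, x ∉ frontier Clim := measure_eq_zero_iff_ae_notMem.1 hfr
      filter_upwards [this] with x hx
      filter_upwards [key x hx] with n hn
      simp only [Set.mem_empty_iff_false, iff_false]
      exact hn)
  simpa using hlim
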